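/- Let n ≥ 4 be an integer and a, b ∈ ℂ with b ≠ 0, and set â = b·(n + a·b), b̂ = −1/b. Let T be a second order operator with components p, q, r, and let T̂ be its inversion (for this n). Then T preserves ℰ^{a,b}ₙ if and only if T preserves ℰ^{a,b} and T̂ preserves ℰ^{â,b̂}. -/

import Mathlib

/-!
The forward implication rests on the observation that `E^{a,b}` consists of the polynomials
`c·(1 - a t) + t²·h` with `t = z - b`. Put `A = T[t²]`, `B = T[t³]`, `G = T[t⁴]`. Eliminating
`p, q, r` gives, for every polynomial `h`,
`T[t² h] = A h + (B - t A) h' + ½ (t² A - 2 t B + G) h''`,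
so `T` maps all of `E^{a,b}` to polynomials. With `K = T[1 - a t]`, elimination also gives
`t⁴ K = -a t (-3 t² A + 5 t B - 2 G) + (1 - a t) (6 t² A - 8 t B + 3 G)`, and hence `G(b) = 0`.
Together with `A, B, K, G ∈ E^{a,b}` this is exactly what is needed for the polynomial above to lie in
`E^{a,b}` (`preserves_of_degree_four`). Only degrees at most `4` enter.

The inversion `f̂(w) = wⁿ f(-1/w)` (`polyInv`) is, up to sign, an involution exchanging
`E^{a,b}ₙ` with `E^{â,b̂}ₙ`, and it intertwines `T` with `T̂` (`SOApply_inv`). So `T̂` preserves `E^{â,b̂}ₙ`,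
and the same argument applies to `T̂`. Conversely, if `T` and `T̂` preserve the two unbounded spaces
and `g = T[f]` with `deg f ≤ n`, then `wⁿ g(-1/w)` agrees with a polynomial away from two points,
which forces `deg g ≤ n` (`natDegree_le_of_inv`).
-/

open Polynomial

noncomputable section

/-- Action of the second order differential operator with components `p, q, r`
on (the evaluation of) a polynomial `f`:  `T[f](z) = p(z)·f″(z) + q(z)·f′(z) + r(z)·f(z)`. -/
def SOApply (p q r : ℂ → ℂ) (f : Polynomial ℂ) (z : ℂ) : ℂ :=
  p z * (Polynomial.derivative (Polynomial.derivative f)).eval z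
    + q z * (Polynomial.derivative f).eval z + r z * f.eval z

/-- `T` (with components `p, q, r`) preserves the set of polynomials `M` on the domain `D`:
for every `f ∈ M`, `T[f]` agrees on `D` with some polynomial belonging to `M`. -/
def SOPreserves (p q r : ℂ → ℂ) (D : Set ℂ) (M : Set (Polynomial ℂ)) : Prop :=
  ∀ f ∈ M, ∃ g ∈ M, ∀ z ∈ D, SOApply p q r f z = g.eval z

/-- `𝒫ₙ`: polynomials of degree at most `n`. -/
def Pn (n : ℕ) : Set (Polynomial ℂ) := {f | f.degree ≤ (n : ℕ)}

/-- The potential invariant `v = r − q′/2 + p″/4 − (q − p′)²/(4p) + p′²/(16p)`. -/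
def potentialInv (p q r : ℂ → ℂ) (z : ℂ) : ℂ :=
  r z - deriv q z / 2 + deriv (deriv p) z / 4
    - (q z - deriv p z) ^ 2 / (4 * p z) + (deriv p z) ^ 2 / (16 * p z)

/-- First component `p̂(w) = w⁴·p(−1/w)` of the inversion of `T`. -/
def invP (p : ℂ → ℂ) (w : ℂ) : ℂ := w ^ 4 * p (-1 / w)

/-- Second component `q̂(w) = w²·q(−1/w) − 2(n−1)·w³·p(−1/w)` of the inversion of `T`. -/
def invQ (n : ℕ) (p q : ℂ → ℂ) (w : ℂ) : ℂ :=
  w ^ 2 * q (-1 / w) - 2 * ((n : ℂ) - 1) * w ^ 3 * p (-1 / w)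

/-- Third component `r̂(w) = r(−1/w) − n·w·q(−1/w) + n(n−1)·w²·p(−1/w)` of the inversion. -/
def invR (n : ℕ) (p q r : ℂ → ℂ) (w : ℂ) : ℂ :=
  r (-1 / w) - (n : ℂ) * w * q (-1 / w) + (n : ℂ) * ((n : ℂ) - 1) * w ^ 2 * p (-1 / w)

/-- `ℰ^{a,b}`: polynomials `f` with `f′(b) + a·f(b) = 0`. -/
def Eab (a b : ℂ) : Set (Polynomial ℂ) :=
  {f | (Polynomial.derivative f).eval b + a * f.eval b = 0}

/-- `ℰ^{a,b}ₙ = ℰ^{a,b} ∩ 𝒫ₙ`. -/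
def EabN (a b : ℂ) (n : ℕ) : Set (Polynomial ℂ) := Eab a b ∩ Pn n

/-- `ℰₙ`: the span of `{1, z², z³, …, zⁿ}`. -/
def En (n : ℕ) : Set (Polynomial ℂ) :=
  (Submodule.span ℂ ((fun k => (X : Polynomial ℂ) ^ k) '' ({0} ∪ Set.Icc 2 n)) :
    Set (Polynomial ℂ))

/-- `Êₙᵃ`: the span of `{1, z, …, z^{n−2}, zⁿ − a·z^{n−1}}`. -/
def EhatN (n : ℕ) (a : ℂ) : Set (Polynomial ℂ) :=
  (Submodule.span ℂ ({(X : Polynomial ℂ) ^ n - C a * X ^ (n - 1)} ∪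
      ((fun k => (X : Polynomial ℂ) ^ k) '' Set.Iic (n - 2))) : Set (Polynomial ℂ))

lemma poly_eq_of_cofinite {D : Set ℂ} (hD : Dᶜ.Finite) {f g : Polynomial ℂ}
    (h : ∀ z ∈ D, f.eval z = g.eval z) : f = g := by
  refine Polynomial.eq_of_infinite_eval_eq f g ?_
  have hinf : D.Infinite := by
    have := hD.infinite_compl
    rwa [compl_compl] at this
  exact hinf.mono h

/-- Every element of `E^{a,b}` is a multiple of `1 - a (X - b)` modulo `(X - b)²`. -/
lemma Eab_decomp {a b : ℂ} {f : Polynomial ℂ} (hf : f ∈ Eab a b) :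
    ∃ c : ℂ, ∃ h : Polynomial ℂ,
      f = C c * (1 - C a * (X - C b)) + (X - C b) ^ 2 * h := by
  have hf' : (derivative f).eval b + a * f.eval b = 0 := hf
  have h1 : (f - C (f.eval b) * (1 - C a * (X - C b))).IsRoot b := by simp [IsRoot]
  obtain ⟨g, hg⟩ := dvd_iff_isRoot.mpr h1
  have h2 : g.IsRoot b := by
    have := congrArg (fun u => (derivative u).eval b) hg
    simp at this
    rw [IsRoot, ← this]
    linear_combination hf'
  obtain ⟨h, rfl⟩ := dvd_iff_isRoot.mpr h2
  exact ⟨f.eval b, h, by linear_combination hg⟩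

/-- An operator sending the elements of `E^{a,b}` of degree at most `4` into `E^{a,b}` preserves
the whole of `E^{a,b}`. -/
lemma preserves_of_degree_four {a b : ℂ} {p q r : ℂ → ℂ} {D : Set ℂ} (hD : Dᶜ.Finite)
    (H : ∀ f ∈ Eab a b, f.natDegree ≤ 4 →
      ∃ g ∈ Eab a b, ∀ z ∈ D, SOApply p q r f z = g.eval z) :
    SOPreserves p q r D (Eab a b) := by
  obtain ⟨K, hK, hK'⟩ := H (1 - C a * (X - C b)) (by simp [Eab])
    (by
      have : (1 - C a * (X - C b)).natDegree ≤ 1 := by compute_degree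
      omega)
  obtain ⟨A, hA, hA'⟩ := H ((X - C b) ^ 2) (by simp [Eab, derivative_pow]) (by simp)
  obtain ⟨B, hB, hB'⟩ := H ((X - C b) ^ 3) (by simp [Eab, derivative_pow]) (by simp)
  obtain ⟨G, hG, hG'⟩ := H ((X - C b) ^ 4) (by simp [Eab, derivative_pow]) (by simp)
  simp only [Eab, Set.mem_ofPred_eq] at hK hA hB hG
  simp [SOApply, derivative_pow] at hK' hA' hB' hG'
  have hid : (X - C b) ^ 4 * K =
      - C a * (X - C b) * (-3 * (X - C b) ^ 2 * A + 5 * (X - C b) * B - 2 * G)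
      + (1 - C a * (X - C b)) * (6 * (X - C b) ^ 2 * A - 8 * (X - C b) * B + 3 * G) := by
    refine poly_eq_of_cofinite hD fun z hz => ?_
    simp [← hK' z hz, ← hA' z hz, ← hB' z hz, ← hG' z hz]
    ring
  have hGb : G.eval b = 0 := by
    have := congrArg (fun u => u.eval b) hid
    simpa using this
  have hGb' : (derivative G).eval b = 0 := by simpa [hGb] using hG
  intro f hf
  obtain ⟨c, h, rfl⟩ := Eab_decomp hf
  refine ⟨C c * K + A * h + (B - (X - C b) * A) * derivative h
    + C (1 / 2) * ((X - C b) ^ 2 * A - 2 * (X - C b) * B + G) * derivative (derivative h), ?_, ?_⟩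
  · simp [Eab, derivative_pow, hGb, hGb']
    linear_combination c * hK + h.eval b * hA + (derivative h).eval b * hB
  · intro z hz
    simp [SOApply, derivative_pow, ← hK' z hz, ← hA' z hz, ← hB' z hz, ← hG' z hz]
    ring

/-- The polynomial `wⁿ f(-1/w)`, meaningful for `f` of degree at most `n`; higher coefficients of
`f` are discarded. -/
def polyInv (n : ℕ) (f : Polynomial ℂ) : Polynomial ℂ :=
  ∑ i ∈ Finset.range (n + 1), C (f.coeff i * (-1) ^ i) * X ^ (n - i)

lemma polyInv_natDegree (n : ℕ) (f : Polynomial ℂ) : (polyInv n f).natDegree ≤ n := by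
  refine natDegree_sum_le_of_forall_le _ _ fun i _ => ?_
  exact (natDegree_C_mul_X_pow_le _ _).trans (Nat.sub_le _ _)

lemma polyInv_eval {n : ℕ} {f : Polynomial ℂ} (hf : f.natDegree ≤ n) {w : ℂ} (hw : w ≠ 0) :
    (polyInv n f).eval w = w ^ n * f.eval (-1 / w) := by
  rw [eval_eq_sum_range' (Nat.lt_succ_of_le hf), polyInv, eval_finsetSum, Finset.mul_sum]
  refine Finset.sum_congr rfl fun i hi => ?_
  have hi' : i ≤ n := Nat.lt_succ_iff.mp (Finset.mem_range.mp hi)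
  simp only [eval_mul, eval_C, eval_pow, eval_X, div_pow]
  rw [pow_sub₀ w hw hi']
  ring

lemma polyInv_eval_zero (n : ℕ) (f : Polynomial ℂ) :
    (polyInv n f).eval 0 = f.coeff n * (-1) ^ n := by
  rw [polyInv, eval_finsetSum, Finset.sum_eq_single n]
  · simp
  · intro i hi hin
    have : n - i ≠ 0 := by
      have := Finset.mem_range.mp hi
      omega
    simp [this]
  · simp

lemma polyInv_derivative {n : ℕ} {f : Polynomial ℂ} (hf : f.natDegree ≤ n) :
    X ^ 2 * derivative (polyInv n f) = C (n : ℂ) * X * polyInv n f + polyInv n (derivative f) := by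
  have hf1 : (derivative f).natDegree ≤ n := (natDegree_derivative_le f).trans (by omega)
  refine poly_eq_of_cofinite (D := {w | w ≠ 0}) (by simp [Set.compl_def]) fun w hw => ?_
  have hw : w ≠ 0 := hw
  have e1 : HasDerivAt (fun x : ℂ => x ^ n * f.eval (-1 / x))
      (n * w ^ (n - 1) * f.eval (-1 / w)
        + w ^ n * ((derivative f).eval (-1 / w) * (1 / w ^ 2))) w := by
    have h2 : HasDerivAt (fun x : ℂ => -1 / x) (1 / w ^ 2) w := by
      have h3 := (hasDerivAt_inv hw).const_mul (-1 : ℂ)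
      simp only [← div_eq_mul_inv, neg_mul_neg] at h3
      exact h3
    exact (hasDerivAt_pow n w).mul ((f.hasDerivAt (-1 / w)).comp w h2)
  have e2 := e1.congr_of_eventuallyEq (f₁ := fun x => (polyInv n f).eval x) (by
    filter_upwards [isOpen_ne.mem_nhds hw] with x hx
    exact polyInv_eval hf hx)
  have e3 := ((polyInv n f).hasDerivAt w).unique e2
  simp only [eval_mul, eval_add, eval_pow, eval_X, eval_C]
  rw [e3, polyInv_eval hf hw, polyInv_eval hf1 hw]
  rcases n with _ | n
  · field_simp
    simp
  · simp only [Nat.add_sub_cancel]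
    field_simp
    ring

/-- The inversion of operators is conjugation by the inversion of polynomials. -/
lemma SOApply_inv {n : ℕ} (p q r : ℂ → ℂ) {f : Polynomial ℂ} (hf : f.natDegree ≤ n) {w : ℂ}
    (hw : w ≠ 0) :
    SOApply (invP p) (invQ n p q) (invR n p q r) (polyInv n f) w
      = w ^ n * SOApply p q r f (-1 / w) := by
  have hf1 : (derivative f).natDegree ≤ n := (natDegree_derivative_le f).trans (by omega)
  have hf2 : (derivative (derivative f)).natDegree ≤ n :=
    (natDegree_derivative_le _).trans (by omega)
  have E1 := congrArg (fun u => u.eval w) (polyInv_derivative hf)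
  have E2 := congrArg (fun u => (derivative u).eval w) (polyInv_derivative hf)
  have E3 := congrArg (fun u => u.eval w) (polyInv_derivative hf1)
  simp at E1 E2 E3
  have F0 := polyInv_eval hf hw
  have F1 := polyInv_eval hf1 hw
  have F2 := polyInv_eval hf2 hw
  simp only [SOApply, invP, invQ, invR]
  linear_combination p (-1 / w) * w ^ 2 * E2 + p (-1 / w) * E3
    + (q (-1 / w) - n * w * p (-1 / w)) * E1 + p (-1 / w) * F2 + q (-1 / w) * F1
    + r (-1 / w) * F0

/-- Inversion of polynomials maps `E^{a,b}ₙ` into `E^{â,b̂}`. -/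
lemma polyInv_mem {n : ℕ} {a b : ℂ} (hb : b ≠ 0) {f : Polynomial ℂ} (hf : f.natDegree ≤ n)
    (hfE : f ∈ Eab a b) : polyInv n f ∈ Eab (b * ((n : ℂ) + a * b)) (-1 / b) := by
  have hf1 : (derivative f).natDegree ≤ n := (natDegree_derivative_le f).trans (by omega)
  have hf' : (derivative f).eval b + a * f.eval b = 0 := hfE
  have hw : -1 / b ≠ 0 := by simp [hb]
  have hbb : -1 / (-1 / b) = b := by field_simp
  have E1 := congrArg (fun u => u.eval (-1 / b)) (polyInv_derivative hf)
  simp only [eval_mul, eval_add, eval_pow, eval_X, eval_C] at E1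
  have F0 := polyInv_eval hf hw
  have F1 := polyInv_eval hf1 hw
  rw [hbb] at F0 F1
  simp only [Eab, Set.mem_ofPred_eq]
  have e : (derivative (polyInv n f)).eval (-1 / b)
      = b ^ 2 * ((-1 / b) ^ 2 * (derivative (polyInv n f)).eval (-1 / b)) := by
    field_simp
  rw [e, E1, F1, F0]
  have e2 : b ^ 2 * ((n : ℂ) * (-1 / b) * ((-1 / b) ^ n * f.eval b))
      = - b * n * ((-1 / b) ^ n * f.eval b) := by field_simp
  rw [mul_add, e2]
  linear_combination b ^ 2 * (-1 / b) ^ n * hf'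

lemma polyInv_inv {n : ℕ} {f : Polynomial ℂ} (hf : f.natDegree ≤ n) :
    polyInv n (C ((-1) ^ n) * polyInv n f) = f := by
  refine poly_eq_of_cofinite (D := {w | w ≠ 0}) (by simp [Set.compl_def]) fun w hw => ?_
  have hw : w ≠ 0 := hw
  have hw' : -1 / w ≠ 0 := by simp [hw]
  have hww : -1 / (-1 / w) = w := by field_simp
  rw [polyInv_eval ((natDegree_C_mul_le _ _).trans (polyInv_natDegree n f)) hw, eval_mul, eval_C,
    polyInv_eval hf hw', hww, ← mul_assoc, ← mul_assoc, ← mul_pow, ← mul_pow]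
  have : w * -1 * (-1 / w) = 1 := by field_simp
  rw [this]
  simp

/-- If `wⁿ g(-1/w)` agrees with a polynomial at all but finitely many `w`, then `deg g ≤ n`:
otherwise, with `m = deg g`, the polynomial `wᵐ g(-1/w)` vanishes at `0`, where its value is
`±` the leading coefficient of `g`. -/
lemma natDegree_le_of_inv {n : ℕ} {g k : Polynomial ℂ} {D : Set ℂ} (hD : Dᶜ.Finite)
    (h0 : ∀ w ∈ D, w ≠ 0) (h : ∀ w ∈ D, w ^ n * g.eval (-1 / w) = k.eval w) :
    g.natDegree ≤ n := by
  by_contra! hlt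
  have hid : polyInv g.natDegree g = X ^ (g.natDegree - n) * k := by
    refine poly_eq_of_cofinite hD fun w hw => ?_
    rw [polyInv_eval le_rfl (h0 w hw), eval_mul, eval_pow, eval_X, ← h w hw, ← mul_assoc, ← pow_add,
      Nat.sub_add_cancel hlt.le]
  have := congrArg (fun u => u.eval 0) hid
  have hne : g.natDegree - n ≠ 0 := by omega
  simp [polyInv_eval_zero, hne] at this
  simp [this] at hlt

lemma mem_Pn {n : ℕ} {f : Polynomial ℂ} : f ∈ Pn n ↔ f.natDegree ≤ n :=
  natDegree_le_iff_degree_le.symm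

/-- for `n ≥ 4`, `b ≠ 0`, `â = b(n+ab)`, `b̂ = −1/b`: `T` preserves
`ℰ^{a,b}ₙ` iff `T` preserves `ℰ^{a,b}` (on `ℂ∖{b}`) and its inversion `T̂` preserves
`ℰ^{â,b̂}` (on `ℂ∖{0, b̂}`). -/
theorem stmt13 (n : ℕ) (hn : 4 ≤ n) (a b : ℂ) (hb : b ≠ 0) (p q r : ℂ → ℂ) :
    SOPreserves p q r {z : ℂ | z ≠ b} (EabN a b n) ↔
      (SOPreserves p q r {z : ℂ | z ≠ b} (Eab a b) ∧
       SOPreserves (invP p) (invQ n p q) (invR n p q r)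
         {w : ℂ | w ≠ 0 ∧ w ≠ -1 / b} (Eab (b * ((n : ℂ) + a * b)) (-1 / b))) := by
  have hD1 : ({z : ℂ | z ≠ b}ᶜ).Finite := by simp [Set.compl_def]
  have hD2 : ({w : ℂ | w ≠ 0 ∧ w ≠ -1 / b}ᶜ).Finite := by
    refine (Set.toFinite {0, -1 / b}).subset fun w hw => ?_
    by_contra hn
    simp only [Set.mem_insert_iff, Set.mem_singleton_iff, not_or] at hn
    exact hw hn
  have hdom : ∀ w : ℂ, w ≠ 0 → w ≠ -1 / b → -1 / w ≠ b := by
    rintro w hw hwb rfl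
    exact hwb (by field_simp)
  have hb' : -1 / b ≠ 0 := by simp [hb]
  have hbb : -1 / (-1 / b) = b := by field_simp
  -- The parameter map `(a, b) ↦ (â, b̂)` is an involution.
  have haa : -1 / b * ((n : ℂ) + b * ((n : ℂ) + a * b) * (-1 / b)) = a := by
    field_simp
    ring
  constructor
  · intro H
    refine ⟨preserves_of_degree_four hD1 fun f hf hfd => ?_,
      preserves_of_degree_four hD2 fun f hf hfd => ?_⟩
    · obtain ⟨g, hg, hg'⟩ := H f ⟨hf, mem_Pn.mpr (hfd.trans hn)⟩
      exact ⟨g, hg.1, hg'⟩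
    · have hfn : f.natDegree ≤ n := hfd.trans hn
      have hmem := polyInv_mem hb' hfn hf
      rw [hbb, haa] at hmem
      have hmem' : C ((-1) ^ n) * polyInv n f ∈ Eab a b := by
        simp only [Eab, Set.mem_ofPred_eq] at hmem ⊢
        simp only [derivative_C_mul, eval_mul, eval_C]
        linear_combination (-1) ^ n * hmem
      have hdeg := (natDegree_C_mul_le ((-1 : ℂ) ^ n) _).trans (polyInv_natDegree n f)
      obtain ⟨g, hg, hg'⟩ := H _ ⟨hmem', mem_Pn.mpr hdeg⟩
      have hgn := mem_Pn.mp hg.2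
      refine ⟨polyInv n g, polyInv_mem hb hgn hg.1, fun w hw => ?_⟩
      have key := SOApply_inv p q r hdeg hw.1
      rw [polyInv_inv hfn] at key
      rw [key, hg' _ (hdom w hw.1 hw.2), polyInv_eval hgn hw.1]
  · rintro ⟨H1, H2⟩ f ⟨hf, hfd⟩
    have hfn := mem_Pn.mp hfd
    obtain ⟨g, hg, hg'⟩ := H1 f hf
    obtain ⟨k, -, hk'⟩ := H2 (polyInv n f) (polyInv_mem hb hfn hf)
    refine ⟨g, ⟨hg, mem_Pn.mpr ?_⟩, hg'⟩
    refine natDegree_le_of_inv hD2 (fun w hw => hw.1) (k := k) fun w hw => ?_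
    rw [← hk' w hw, SOApply_inv p q r hfn hw.1, hg' _ (hdom w hw.1 hw.2)]
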